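/- Fix m ≥ 0, g_s > 0, μ0 ∈ ℝ, F > 0, z ∈ {−1, 1}, and assume the positivity condition (z = 1, or z = −1 and mF > μ0). Then the functions T0 ↦ ρ, T0 ↦ σ, T0 ↦ n (energy density, entropy density, particle density as functions of the temperature parameter T0 > 0, all other parameters fixed) are differentiable and satisfy the temperature component of the first law: F·∂ρ/∂T0 = T0·∂σ/∂T0 + μ0·∂n/∂T0. -/

import Mathlib

/-!
Write `g t ε = (exp ((ε F - μ0) / t) + z)⁻¹`, so that all the densities are of the form
`∫ w · g t` over `(m, ∞)` with weights `w` of polynomial growth.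

*Differentiability.* Positivity of the denominator is uniform for `0 < t ≤ 2 T`:
`exp x + z ≥ c exp x` with one constant `c > 0` (`exists_denominator_bound`). Hence on the interval
`(T / 2, 2 T)` both `g t ε` and `∂g/∂t` are at most a constant times `(1 + ε) exp (-b ε)`, and
one differentiates under the integral sign by dominated convergence (`hasDerivAt_weighted`).

*First law.* With `P` the pressure, the integrands give the Euler relation
`T σ = F (ρ + P) - μ0 n`; differentiating it, the first law is equivalent to `σ = F ∂P/∂T`.
Since `g` depends on `(ε F - μ0) / t` only, `t ∂g/∂t = -(ε - μ0 / F) ∂g/∂ε`, and an integration by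
parts in `ε` turns `∂P/∂T` into `σ / F` (`pressure_deriv`). The boundary term at `ε = m`
vanishes because of the factor `(ε² - m²)^{3/2}`, the one at infinity by exponential decay.
-/

open MeasureTheory Real Set

/-- One-particle phase-space density (Planck units, h³ = 8π³):
`𝒩(E) = (g_s/(8π³)) · (exp((E − μ0)/T0) + z)⁻¹`. -/
noncomputable def phaseN (gs T0 μ0 z E : ℝ) : ℝ :=
  gs / (8 * π ^ 3) * (Real.exp ((E - μ0) / T0) + z)⁻¹

/-- Energy density `ρ = 4π ∫_m^∞ [(ε² − m²)^{3/2} + m²(ε² − m²)^{1/2}] 𝒩(εF) dε`. -/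
noncomputable def rhoDef (gs m T0 μ0 z F : ℝ) : ℝ :=
  4 * π * ∫ ε in Ioi m,
    ((ε ^ 2 - m ^ 2) ^ ((3 : ℝ) / 2) + m ^ 2 * (ε ^ 2 - m ^ 2) ^ ((1 : ℝ) / 2))
      * phaseN gs T0 μ0 z (ε * F)

/-- Pressure `P = (4π/3) ∫_m^∞ (ε² − m²)^{3/2} 𝒩(εF) dε`. -/
noncomputable def Pdef (gs m T0 μ0 z F : ℝ) : ℝ :=
  4 * π / 3 * ∫ ε in Ioi m, (ε ^ 2 - m ^ 2) ^ ((3 : ℝ) / 2) * phaseN gs T0 μ0 z (ε * F)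

/-- Entropy density
`σ = (4πF/T0) ∫_m^∞ [(4/3)(ε² − m²)^{3/2} + (ε² − m²)^{1/2}(m² − ε μ0/F)] 𝒩(εF) dε`. -/
noncomputable def sigmaDef (gs m T0 μ0 z F : ℝ) : ℝ :=
  4 * π * F / T0 * ∫ ε in Ioi m,
    ((4 / 3) * (ε ^ 2 - m ^ 2) ^ ((3 : ℝ) / 2)
      + (ε ^ 2 - m ^ 2) ^ ((1 : ℝ) / 2) * (m ^ 2 - ε * μ0 / F))
      * phaseN gs T0 μ0 z (ε * F)

/-- Particle density `n = 4π ∫_m^∞ (ε² − m²)^{1/2} ε 𝒩(εF) dε`. -/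
noncomputable def nDef (gs m T0 μ0 z F : ℝ) : ℝ :=
  4 * π * ∫ ε in Ioi m, (ε ^ 2 - m ^ 2) ^ ((1 : ℝ) / 2) * ε * phaseN gs T0 μ0 z (ε * F)

/-! ### The occupation number: derivatives and bounds -/

/-- The occupation number `(exp ((ε F - μ0) / t) + z)⁻¹` at temperature `t` and energy `ε F`. -/
noncomputable def occ (μ0 F z t ε : ℝ) : ℝ := (Real.exp ((ε * F - μ0) / t) + z)⁻¹

/-- The partial derivative of `occ` with respect to the temperature `t`. -/
noncomputable def occDeriv (μ0 F z t ε : ℝ) : ℝ :=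
  Real.exp ((ε * F - μ0) / t) * ((ε * F - μ0) / t ^ 2) * occ μ0 F z t ε ^ 2

lemma measurable_occ (μ0 F z t : ℝ) : Measurable (occ μ0 F z t) := by
  unfold occ; fun_prop

lemma measurable_occDeriv (μ0 F z t : ℝ) : Measurable (occDeriv μ0 F z t) := by
  have := measurable_occ μ0 F z t
  unfold occDeriv; fun_prop

/-- The denominator is comparable to the exponential, uniformly in the energy and in bounded
temperatures. For `z = -1` this uses the strict inequality `μ0 < m F`. -/
lemma exists_denominator_bound {m μ0 F z T : ℝ} (hF : 0 < F) (hT : 0 < T)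
    (hz : z = -1 ∨ z = 1) (hpos : z = -1 → μ0 < m * F) :
    ∃ c > 0, ∀ t, 0 < t → t ≤ 2 * T → ∀ ε, m ≤ ε →
      c * Real.exp ((ε * F - μ0) / t) ≤ Real.exp ((ε * F - μ0) / t) + z := by
  rcases hz with rfl | rfl
  · have hμ := hpos rfl
    refine ⟨1 - Real.exp (-((m * F - μ0) / (2 * T))), ?_, ?_⟩
    · have : 0 < (m * F - μ0) / (2 * T) := div_pos (by linarith) (by linarith)
      have := Real.exp_lt_one_iff.2 (by linarith : -((m * F - μ0) / (2 * T)) < 0)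
      linarith
    · intro t ht htT ε hε
      have h1 : (m * F - μ0) / (2 * T) ≤ (ε * F - μ0) / t := by
        have : m * F ≤ ε * F := by gcongr
        exact div_le_div₀ (by linarith) (by linarith) ht htT
      have h2 : 1 ≤ Real.exp (-((m * F - μ0) / (2 * T))) * Real.exp ((ε * F - μ0) / t) := by
        rw [← Real.exp_add]
        exact Real.one_le_exp (by linarith)
      linarith
  · exact ⟨1, one_pos, fun t _ _ ε _ => by linarith⟩

lemma denominator_pos {m μ0 F z t ε : ℝ} (hF : 0 < F) (ht : 0 < t)
    (hz : z = -1 ∨ z = 1) (hpos : z = -1 → μ0 < m * F) (hε : m ≤ ε) :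
    0 < Real.exp ((ε * F - μ0) / t) + z := by
  obtain ⟨c, hc, h⟩ := exists_denominator_bound hF ht hz hpos
  exact lt_of_lt_of_le (by positivity) (h t ht (by linarith) ε hε)

lemma hasDerivAt_occ_temp {m μ0 F z t ε : ℝ} (hF : 0 < F) (ht : 0 < t)
    (hz : z = -1 ∨ z = 1) (hpos : z = -1 → μ0 < m * F) (hε : m ≤ ε) :
    HasDerivAt (fun s => occ μ0 F z s ε) (occDeriv μ0 F z t ε) t := by
  have hD := denominator_pos hF ht hz hpos hε
  have h1 : HasDerivAt (fun s => (ε * F - μ0) / s) (-(ε * F - μ0) / t ^ 2) t := by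
    refine ((hasDerivAt_const t (ε * F - μ0)).div (hasDerivAt_id t) ht.ne').congr_deriv ?_
    simp
  have h2 := ((h1.exp).add_const z).inv hD.ne'
  refine h2.congr_deriv ?_
  simp only [occDeriv, occ]
  field_simp

lemma hasDerivAt_occ_energy {m μ0 F z t ε : ℝ} (hF : 0 < F) (ht : 0 < t)
    (hz : z = -1 ∨ z = 1) (hpos : z = -1 → μ0 < m * F) (hε : m ≤ ε) :
    HasDerivAt (fun e => occ μ0 F z t e)
      (-(Real.exp ((ε * F - μ0) / t) * (F / t) * occ μ0 F z t ε ^ 2)) ε := by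
  have hD := denominator_pos hF ht hz hpos hε
  have h1 : HasDerivAt (fun e => (e * F - μ0) / t) (F / t) ε := by
    simpa using (((hasDerivAt_id ε).mul_const F).sub_const μ0).div_const t
  have h2 := ((h1.exp).add_const z).inv hD.ne'
  refine h2.congr_deriv ?_
  simp only [occ]
  field_simp

/-- Exponential bounds on the occupation number and its temperature derivative, uniform for
temperatures in `(T / 2, 2 T)`. -/
lemma exists_occ_bound {m μ0 F z T : ℝ} (hm : 0 ≤ m) (hF : 0 < F) (hT : 0 < T)
    (hz : z = -1 ∨ z = 1) (hpos : z = -1 → μ0 < m * F) :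
    ∃ C, 0 ≤ C ∧ ∀ t ∈ Ioo (T / 2) (2 * T), ∀ ε, m ≤ ε →
      |occ μ0 F z t ε| ≤ C * Real.exp (-(F / (2 * T)) * ε) ∧
      |occDeriv μ0 F z t ε| ≤ C * (1 + ε) * Real.exp (-(F / (2 * T)) * ε) := by
  obtain ⟨c, hc, hcb⟩ := exists_denominator_bound hF hT hz hpos
  set B := Real.exp (|μ0| / (T / 2)) with hB
  set L := (F + |μ0|) / (T / 2) ^ 2 with hL
  have hB0 : 0 < B := Real.exp_pos _
  have hL0 : 0 ≤ L := by positivity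
  refine ⟨c⁻¹ * B + L * (c⁻¹ ^ 2 * B), by positivity, ?_⟩
  rintro t ⟨ht1, ht2⟩ ε hε
  have ht : 0 < t := by linarith
  have hε0 : 0 ≤ ε := hm.trans hε
  have hD := hcb t ht ht2.le ε hε
  set E := Real.exp ((ε * F - μ0) / t) with hE
  have hE0 : 0 < E := Real.exp_pos _
  have hDpos : 0 < E + z := lt_of_lt_of_le (by positivity) hD
  have hEinv : E⁻¹ ≤ B * Real.exp (-(F / (2 * T)) * ε) := by
    rw [hE, hB, ← Real.exp_neg, ← Real.exp_add]
    apply Real.exp_le_exp.2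
    have h1 : μ0 / t ≤ |μ0| / (T / 2) :=
      div_le_div₀ (abs_nonneg _) (le_abs_self _) (by linarith) ht1.le
    have h2 : F * ε / (2 * T) ≤ F * ε / t :=
      div_le_div_of_nonneg_left (by positivity) ht ht2.le
    have h3 : -((ε * F - μ0) / t) = μ0 / t - F * ε / t := by ring
    have h4 : -(F / (2 * T)) * ε = -(F * ε / (2 * T)) := by ring
    rw [h3, h4]; linarith
  have hocc : occ μ0 F z t ε ≤ c⁻¹ * E⁻¹ := by
    rw [← mul_inv]
    exact inv_anti₀ (by positivity) hD
  have hocc0 : 0 ≤ occ μ0 F z t ε := by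
    change 0 ≤ (E + z)⁻¹
    positivity
  set X := Real.exp (-(F / (2 * T)) * ε) with hX
  have hX0 : 0 < X := Real.exp_pos _
  constructor
  · rw [abs_of_nonneg hocc0]
    calc _ ≤ c⁻¹ * E⁻¹ := hocc
      _ ≤ c⁻¹ * (B * X) := by gcongr
      _ = (c⁻¹ * B + 0) * X := by ring
      _ ≤ _ := by gcongr; positivity
  · have hlin : |(ε * F - μ0) / t ^ 2| ≤ L * (1 + ε) := by
      rw [abs_div, abs_of_pos (by positivity : 0 < t ^ 2)]
      have h1 : |ε * F - μ0| ≤ (F + |μ0|) * (1 + ε) := by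
        have h := abs_sub (ε * F) μ0
        rw [abs_of_nonneg (by positivity : 0 ≤ ε * F)] at h
        nlinarith [mul_nonneg (abs_nonneg μ0) hε0]
      calc _ ≤ (F + |μ0|) * (1 + ε) / (T / 2) ^ 2 := by gcongr
        _ = _ := by rw [hL]; ring
    have hsq : E * occ μ0 F z t ε ^ 2 ≤ c⁻¹ ^ 2 * (B * X) := by
      calc _ ≤ E * (c⁻¹ * E⁻¹) ^ 2 := by gcongr
        _ = c⁻¹ ^ 2 * E⁻¹ := by field_simp
        _ ≤ _ := by gcongr
    have : occDeriv μ0 F z t ε = (ε * F - μ0) / t ^ 2 * (E * occ μ0 F z t ε ^ 2) := by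
      unfold occDeriv; ring
    rw [this, abs_mul, abs_of_nonneg (by positivity : 0 ≤ E * occ μ0 F z t ε ^ 2)]
    calc _ ≤ L * (1 + ε) * (c⁻¹ ^ 2 * (B * X)) := by gcongr
      _ = (0 + L * (c⁻¹ ^ 2 * B)) * (1 + ε) * X := by ring
      _ ≤ _ := by gcongr; positivity

/-! ### Integrals of weighted occupation numbers -/

lemma integrableOn_pow_mul_exp {m b : ℝ} (hb : 0 < b) (k : ℕ) :
    IntegrableOn (fun ε : ℝ => (1 + ε) ^ k * Real.exp (-b * ε)) (Ioi m) := by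
  apply integrable_of_isBigO_exp_neg (b := b / 2) (half_pos hb) (by fun_prop)
  have h := (isLittleO_pow_exp_pos_mul_atTop k (half_pos hb)).isBigO
  have h' := (h.comp_tendsto (Filter.tendsto_atTop_add_const_left Filter.atTop 1 Filter.tendsto_id)).mul
    (Asymptotics.isBigO_refl (fun ε : ℝ => Real.exp (-b * ε)) Filter.atTop)
  refine h'.trans (Asymptotics.IsBigO.of_bound (Real.exp (b / 2)) (Filter.Eventually.of_forall ?_))
  intro ε
  simp only [Function.comp, id, norm_mul, Real.norm_eq_abs, Real.abs_exp]
  rw [← Real.exp_add, ← Real.exp_add]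
  apply (Real.exp_le_exp.2 _)
  linarith

/-- An admissible weight: continuous, with at most quartic growth on `[m, ∞)`. -/
def IsWeight (m : ℝ) (w : ℝ → ℝ) : Prop :=
  Continuous w ∧ ∃ K, 0 ≤ K ∧ ∀ ε, m ≤ ε → |w ε| ≤ K * (1 + ε) ^ 4

lemma IsWeight.add {m : ℝ} {v w : ℝ → ℝ} (hv : IsWeight m v) (hw : IsWeight m w) :
    IsWeight m (fun ε => v ε + w ε) := by
  obtain ⟨hvc, K, hK, hvK⟩ := hv
  obtain ⟨hwc, L, hL, hwL⟩ := hw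
  refine ⟨hvc.add hwc, K + L, by positivity, fun ε hε => ?_⟩
  calc _ ≤ |v ε| + |w ε| := abs_add_le _ _
    _ ≤ _ := by rw [add_mul]; exact add_le_add (hvK ε hε) (hwL ε hε)

lemma IsWeight.const_mul {m : ℝ} {w : ℝ → ℝ} (hw : IsWeight m w) (a : ℝ) :
    IsWeight m (fun ε => a * w ε) := by
  obtain ⟨hwc, L, hL, hwL⟩ := hw
  refine ⟨hwc.const_mul a, |a| * L, by positivity, fun ε hε => ?_⟩
  rw [abs_mul, mul_assoc]
  exact mul_le_mul_of_nonneg_left (hwL ε hε) (abs_nonneg a)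

/-- `(ε² - m²)^p ε^k` is an admissible weight when `2 p + k ≤ 4`. -/
lemma isWeight_rpow {m p : ℝ} (hm : 0 ≤ m) (hp : 0 ≤ p) (k : ℕ) (hk : 2 * p + k ≤ 4) :
    IsWeight m (fun ε => (ε ^ 2 - m ^ 2) ^ p * ε ^ k) := by
  refine ⟨((by fun_prop : Continuous fun ε : ℝ => ε ^ 2 - m ^ 2).rpow_const
    fun _ => Or.inr hp).mul (by fun_prop), 1, zero_le_one, fun ε hε => ?_⟩
  have hε0 : 0 ≤ ε := hm.trans hε
  have ha : 0 ≤ ε ^ 2 - m ^ 2 := by nlinarith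
  rw [abs_of_nonneg (by positivity), one_mul]
  calc _ ≤ ((1 + ε) ^ 2) ^ p * (1 + ε) ^ k := by
        refine mul_le_mul (Real.rpow_le_rpow ha (by nlinarith [sq_nonneg m]) hp)
          (pow_le_pow_left₀ hε0 (by linarith) k) (by positivity) (by positivity)
    _ = (1 + ε) ^ (2 * p + k) := by
        rw [Real.rpow_add (by linarith), Real.rpow_mul (by linarith), Real.rpow_natCast,
          Real.rpow_two]
    _ ≤ (1 + ε) ^ (4 : ℝ) := Real.rpow_le_rpow_of_exponent_le (by linarith) hk
    _ = _ := by exact_mod_cast Real.rpow_natCast (1 + ε) 4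

section weighted

variable {m μ0 F z T : ℝ} {w : ℝ → ℝ}

lemma integrable_weighted (hm : 0 ≤ m) (hF : 0 < F) (hT : 0 < T)
    (hz : z = -1 ∨ z = 1) (hpos : z = -1 → μ0 < m * F) (hw : IsWeight m w) :
    IntegrableOn (fun ε => w ε * occ μ0 F z T ε) (Ioi m) := by
  obtain ⟨hwc, K, hK, hwK⟩ := hw
  obtain ⟨C, hC, hb⟩ := exists_occ_bound hm hF hT hz hpos
  have hint := (integrableOn_pow_mul_exp (m := m) (b := F / (2 * T)) (by positivity) 4).const_mul
    (K * C)
  refine hint.mono' (hwc.measurable.mul (measurable_occ μ0 F z T)).aestronglyMeasurable ?_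
  refine (ae_restrict_iff' measurableSet_Ioi).2 (Filter.Eventually.of_forall fun ε hε => ?_)
  have hε' : m ≤ ε := le_of_lt hε
  have hε0 : 0 ≤ ε := hm.trans hε'
  rw [norm_mul, Real.norm_eq_abs, Real.norm_eq_abs]
  calc _ ≤ (K * (1 + ε) ^ 4) * (C * Real.exp (-(F / (2 * T)) * ε)) := by
        gcongr
        · exact hwK ε hε'
        · exact (hb T ⟨by linarith, by linarith⟩ ε hε').1
    _ = _ := by ring

/-- Differentiation of a weighted occupation integral under the integral sign. -/
lemma hasDerivAt_weighted (hm : 0 ≤ m) (hF : 0 < F) (hT : 0 < T)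
    (hz : z = -1 ∨ z = 1) (hpos : z = -1 → μ0 < m * F) (hw : IsWeight m w) :
    IntegrableOn (fun ε => w ε * occDeriv μ0 F z T ε) (Ioi m) ∧
    HasDerivAt (fun t => ∫ ε in Ioi m, w ε * occ μ0 F z t ε)
      (∫ ε in Ioi m, w ε * occDeriv μ0 F z T ε) T := by
  have hint0 := integrable_weighted hm hF hT hz hpos hw
  obtain ⟨hwc, K, hK, hwK⟩ := hw
  obtain ⟨C, hC, hb⟩ := exists_occ_bound hm hF hT hz hpos
  have hint := (integrableOn_pow_mul_exp (m := m) (b := F / (2 * T)) (by positivity) 5).const_mul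
    (K * C)
  refine hasDerivAt_integral_of_dominated_loc_of_deriv_le
    (F := fun t ε => w ε * occ μ0 F z t ε) (F' := fun t ε => w ε * occDeriv μ0 F z t ε)
    (s := Ioo (T / 2) (2 * T)) (Ioo_mem_nhds (by linarith) (by linarith))
    (Filter.Eventually.of_forall fun t =>
      (hwc.measurable.mul (measurable_occ μ0 F z t)).aestronglyMeasurable)
    hint0 (hwc.measurable.mul (measurable_occDeriv μ0 F z T)).aestronglyMeasurable ?_ hint ?_
  · refine (ae_restrict_iff' measurableSet_Ioi).2 (Filter.Eventually.of_forall fun ε hε t ht => ?_)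
    have hε' : m ≤ ε := le_of_lt hε
    have hε0 : 0 ≤ ε := hm.trans hε'
    rw [norm_mul, Real.norm_eq_abs, Real.norm_eq_abs]
    calc _ ≤ (K * (1 + ε) ^ 4) * (C * (1 + ε) * Real.exp (-(F / (2 * T)) * ε)) := by
          gcongr
          · exact hwK ε hε'
          · exact (hb t ht ε hε').2
      _ = _ := by ring
  · refine (ae_restrict_iff' measurableSet_Ioi).2 (Filter.Eventually.of_forall fun ε hε t ht => ?_)
    exact (hasDerivAt_occ_temp hF (by linarith [ht.1]) hz hpos (le_of_lt hε)).const_mul (w ε)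

end weighted

/-! ### The weights of the densities -/

lemma rpow_three_halves {a : ℝ} (ha : 0 ≤ a) : a ^ ((3 : ℝ) / 2) = a * a ^ ((1 : ℝ) / 2) := by
  rw [show (3 : ℝ) / 2 = 1 + 1 / 2 by norm_num, Real.rpow_add_of_nonneg ha (by norm_num)
    (by norm_num), Real.rpow_one]

lemma isWeight_energy {m : ℝ} (hm : 0 ≤ m) : IsWeight m (fun ε =>
    (ε ^ 2 - m ^ 2) ^ ((3 : ℝ) / 2) + m ^ 2 * (ε ^ 2 - m ^ 2) ^ ((1 : ℝ) / 2)) := by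
  simpa using (isWeight_rpow hm (p := 3 / 2) (by norm_num) 0 (by norm_num)).add
    ((isWeight_rpow hm (p := 1 / 2) (by norm_num) 0 (by norm_num)).const_mul (m ^ 2))

lemma isWeight_particle {m : ℝ} (hm : 0 ≤ m) : IsWeight m (fun ε =>
    (ε ^ 2 - m ^ 2) ^ ((1 : ℝ) / 2) * ε) := by
  simpa using isWeight_rpow hm (p := 1 / 2) (by norm_num) 1 (by norm_num)

lemma isWeight_pressure {m : ℝ} (hm : 0 ≤ m) : IsWeight m (fun ε =>
    (ε ^ 2 - m ^ 2) ^ ((3 : ℝ) / 2)) := by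
  simpa using isWeight_rpow hm (p := 3 / 2) (by norm_num) 0 (by norm_num)

lemma isWeight_entropy {m : ℝ} (hm : 0 ≤ m) (μ0 F : ℝ) : IsWeight m (fun ε =>
    (4 / 3) * (ε ^ 2 - m ^ 2) ^ ((3 : ℝ) / 2)
      + (ε ^ 2 - m ^ 2) ^ ((1 : ℝ) / 2) * (m ^ 2 - ε * μ0 / F)) := by
  have h := ((isWeight_energy hm).add ((isWeight_pressure hm).const_mul (1 / 3))).add
    ((isWeight_particle hm).const_mul (-(μ0 / F)))
  convert h using 2
  ring

/-! ### Integration by parts and the first law -/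

/-- The identity `T ∂P/∂T = T σ / F`, up to common constants: integration by parts in the energy. -/
lemma pressure_deriv {m μ0 F z T : ℝ} (hm : 0 ≤ m) (hF : 0 < F) (hT : 0 < T)
    (hz : z = -1 ∨ z = 1) (hpos : z = -1 → μ0 < m * F) :
    T * ∫ ε in Ioi m, (1 / 3) * (ε ^ 2 - m ^ 2) ^ ((3 : ℝ) / 2) * occDeriv μ0 F z T ε
      = ∫ ε in Ioi m, ((4 / 3) * (ε ^ 2 - m ^ 2) ^ ((3 : ℝ) / 2)
      + (ε ^ 2 - m ^ 2) ^ ((1 : ℝ) / 2) * (m ^ 2 - ε * μ0 / F)) * occ μ0 F z T ε := by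
  set v : ℝ → ℝ := fun ε => (1 / 3) * (ε ^ 2 - m ^ 2) ^ ((3 : ℝ) / 2) with hv
  set u : ℝ → ℝ := fun ε => (4 / 3) * (ε ^ 2 - m ^ 2) ^ ((3 : ℝ) / 2)
      + (ε ^ 2 - m ^ 2) ^ ((1 : ℝ) / 2) * (m ^ 2 - ε * μ0 / F) with hu
  have hvw : IsWeight m v := (isWeight_pressure hm).const_mul _
  have hIu : IntegrableOn (fun ε => u ε * occ μ0 F z T ε) (Ioi m) :=
    integrable_weighted hm hF hT hz hpos (isWeight_entropy hm μ0 F)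
  have hIv := (hasDerivAt_weighted hm hF hT hz hpos hvw).1
  -- The function whose energy derivative is the difference of the two integrands.
  set f : ℝ → ℝ := fun ε => v ε * (ε - μ0 / F) * occ μ0 F z T ε with hf
  have hIf : IntegrableOn f (Ioi m) := by
    have hw : IsWeight m (fun ε => v ε * (ε - μ0 / F)) := by
      have h := ((isWeight_rpow hm (p := 3 / 2) (by norm_num) 1 (by norm_num)).const_mul
        (1 / 3)).add (hvw.const_mul (-(μ0 / F)))
      convert h using 2
      simp only [hv]; ring
    exact integrable_weighted hm hF hT hz hpos hw
  have hder : ∀ ε ∈ Ioi m, HasDerivAt f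
      (u ε * occ μ0 F z T ε - T * (v ε * occDeriv μ0 F z T ε)) ε := by
    intro ε hε
    have hε' : m < ε := hε
    have ha : 0 < ε ^ 2 - m ^ 2 := by nlinarith
    have h1 : HasDerivAt v (ε * (ε ^ 2 - m ^ 2) ^ ((1 : ℝ) / 2)) ε := by
      have h := ((((hasDerivAt_id ε).pow 2).sub_const (m ^ 2)).rpow_const (p := 3 / 2)
        (Or.inl ha.ne')).const_mul (1 / 3)
      refine h.congr_deriv ?_
      simp only [id, Pi.pow_apply]
      rw [show (3 : ℝ) / 2 - 1 = 1 / 2 by norm_num]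
      push_cast
      ring
    have h2 := (h1.mul ((hasDerivAt_id ε).sub_const (μ0 / F))).mul
      (hasDerivAt_occ_energy hF hT hz hpos hε'.le)
    refine h2.congr_deriv ?_
    simp only [hu, hv, occDeriv, id, Pi.mul_apply, rpow_three_halves ha.le]
    field_simp
    ring
  have hI' : IntegrableOn (fun ε => u ε * occ μ0 F z T ε - T * (v ε * occDeriv μ0 F z T ε))
      (Ioi m) := hIu.sub (hIv.const_mul T)
  have hcont : ContinuousWithinAt f (Ici m) m :=
    ((hvw.1.mul (by fun_prop)).continuousAt.mul
      (hasDerivAt_occ_energy hF hT hz hpos le_rfl).continuousAt).continuousWithinAt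
  have hlim := tendsto_zero_of_hasDerivAt_of_integrableOn_Ioi hder hI' hIf
  have key := integral_Ioi_of_hasDerivAt_of_tendsto hcont hder hI' hlim
  have hfm : f m = 0 := by
    simp [hf, hv, Real.zero_rpow]
  rw [integral_sub hIu (hIv.const_mul T), integral_const_mul, hfm] at key
  linarith

/-- The energy density, entropy density and particle density are differentiable functions of
the temperature parameter `T0 > 0` and satisfy the temperature component of the first law:
`F ∂ρ/∂T0 = T0 ∂σ/∂T0 + μ0 ∂n/∂T0`. -/
theorem stmt11 (m gs μ0 F z : ℝ) (hm : 0 ≤ m) (hgs : 0 < gs) (hF : 0 < F)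
    (hz : z = -1 ∨ z = 1) (hpos : z = -1 → μ0 < m * F) :
    ∀ T0 > (0 : ℝ),
      DifferentiableAt ℝ (fun t => rhoDef gs m t μ0 z F) T0 ∧
      DifferentiableAt ℝ (fun t => sigmaDef gs m t μ0 z F) T0 ∧
      DifferentiableAt ℝ (fun t => nDef gs m t μ0 z F) T0 ∧
      F * deriv (fun t => rhoDef gs m t μ0 z F) T0
        = T0 * deriv (fun t => sigmaDef gs m t μ0 z F) T0
          + μ0 * deriv (fun t => nDef gs m t μ0 z F) T0 := by
  intro T hT
  set A := gs / (8 * π ^ 3) with hA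
  have hpull : ∀ (w : ℝ → ℝ) (t : ℝ), ∫ ε in Ioi m, w ε * phaseN gs t μ0 z (ε * F)
      = A * ∫ ε in Ioi m, w ε * occ μ0 F z t ε := by
    intro w t
    rw [← integral_const_mul]
    congr 1; ext ε
    simp only [phaseN, occ, hA]; ring
  have hρ' : (fun t => rhoDef gs m t μ0 z F) = _ := funext fun t =>
    congrArg (4 * π * ·) (hpull _ t)
  have hn' : (fun t => nDef gs m t μ0 z F) = _ := funext fun t =>
    congrArg (4 * π * ·) (hpull _ t)
  have hσ' : (fun t => sigmaDef gs m t μ0 z F) = _ := funext fun t =>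
    congrArg (4 * π * F / t * ·) (hpull _ t)
  obtain ⟨hIρ, hDρ⟩ := hasDerivAt_weighted hm hF hT hz hpos (isWeight_energy hm)
  obtain ⟨hIn, hDn⟩ := hasDerivAt_weighted hm hF hT hz hpos (isWeight_particle hm)
  obtain ⟨hIP, -⟩ := hasDerivAt_weighted hm hF hT hz hpos ((isWeight_pressure hm).const_mul (1 / 3))
  obtain ⟨hIσ, hDσ⟩ := hasDerivAt_weighted hm hF hT hz hpos (isWeight_entropy hm μ0 F)
  have hP := pressure_deriv hm hF hT hz hpos
  -- The temperature derivative of the Euler relation `T σ = F (ρ + P) - μ0 n`, up to constants.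
  have hsplit : (∫ ε in Ioi m, ((4 / 3) * (ε ^ 2 - m ^ 2) ^ ((3 : ℝ) / 2)
      + (ε ^ 2 - m ^ 2) ^ ((1 : ℝ) / 2) * (m ^ 2 - ε * μ0 / F)) * occDeriv μ0 F z T ε)
      = (∫ ε in Ioi m, ((ε ^ 2 - m ^ 2) ^ ((3 : ℝ) / 2)
          + m ^ 2 * (ε ^ 2 - m ^ 2) ^ ((1 : ℝ) / 2)) * occDeriv μ0 F z T ε)
        + (∫ ε in Ioi m, (1 / 3) * (ε ^ 2 - m ^ 2) ^ ((3 : ℝ) / 2) * occDeriv μ0 F z T ε)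
        - μ0 / F * ∫ ε in Ioi m, (ε ^ 2 - m ^ 2) ^ ((1 : ℝ) / 2) * ε * occDeriv μ0 F z T ε := by
    rw [← integral_add hIρ hIP, ← integral_const_mul]
    refine Eq.trans ?_ (integral_sub (hIρ.add hIP) (hIn.const_mul _))
    congr 1; ext ε
    ring
  have hρ := (hDρ.const_mul A).const_mul (4 * π)
  have hn := (hDn.const_mul A).const_mul (4 * π)
  have hσ := ((hasDerivAt_const T (4 * π * F)).div (hasDerivAt_id T) hT.ne').mul
    (hDσ.const_mul A)
  rw [← hρ'] at hρ
  rw [← hn'] at hn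
  have hσ := hσ.congr_of_eventuallyEq (Filter.EventuallyEq.of_eq hσ')
  refine ⟨hρ.differentiableAt, hσ.differentiableAt, hn.differentiableAt, ?_⟩
  rw [hρ.deriv, hσ.deriv, hn.deriv, hsplit, ← hP]
  simp only [id, Pi.div_apply]
  field_simp
  ring
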